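/- arXiv:2004.00169 — 2 statements merged into one kernel-verified Lean document; each statement's English description precedes it below -/
import Mathlib

section
/- Let k be an algebraically closed field of characteristic zero. For i = 1, 2 let g_i be a finite-dimensional semisimple Lie algebra over k, let b_i be a Borel subalgebra of g_i (a maximal solvable Lie subalgebra), let h_i ⊆ b_i be a Cartan subalgebra of g_i, and let p_i be a Lie subalgebra with h_i ⊆ p_i ⊆ b_i. Assume each p_i is Frobenius and two-step solvable. Then p_1 and p_2 are isomorphic as Lie algebras over k if and only if dim p_1 = dim p_2. -/
/-- A Borel subalgebra: a maximal solvable Lie subalgebra. -/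
def IsBorelSubalgebra (k : Type*) {g : Type*} [Field k] [LieRing g] [LieAlgebra k g]
    (b : LieSubalgebra k g) : Prop :=
  LieAlgebra.IsSolvable ↥b ∧
    ∀ c : LieSubalgebra k g, LieAlgebra.IsSolvable ↥c → b ≤ c → c = b

/-- A finite-dimensional Lie algebra is Frobenius if some functional `f` has nondegenerate
Kirillov form `B_f(x,y) = f ⁅x,y⁆`. -/
def IsFrobeniusLieAlgebra (k L : Type*) [Field k] [LieRing L] [LieAlgebra k L] : Prop :=
  ∃ f : Module.Dual k L, ∀ y : L, (∀ x : L, f ⁅x, y⁆ = 0) → y = 0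

/-- A Lie algebra is two-step solvable if `⁅L,L⁆ ≠ 0` and `⁅⁅L,L⁆,⁅L,L⁆⁆ = 0`. -/
def IsTwoStepSolvable (k L : Type*) [Field k] [LieRing L] [LieAlgebra k L] : Prop :=
  LieAlgebra.derivedSeries k L 1 ≠ ⊥ ∧ LieAlgebra.derivedSeries k L 2 = ⊥

/-!
Let `V` be the span of the root vectors of `p`, so that `p = H ⊕ V`. Two-step solvability makes
`V` abelian, so `H` and `V` are complementary isotropic subspaces for a nondegenerate Kirillov
form, which therefore pairs them perfectly. Take a basis `x` of `V` made of root vectors and the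
dual basis `y` of `H`. Every `y i` acts diagonally on `x`, so duality forces `⁅y i, x j⁆ = 0` for
`i ≠ j` and, after rescaling, `⁅y i, x i⁆ = x i`. Hence `p` is a direct sum of `(dim p) / 2`
copies of the two-dimensional nonabelian Lie algebra.
-/

open Module Submodule LieAlgebra LieModule

section LinearAlgebra

theorem exists_basis_span_subset {K M : Type*} [DivisionRing K] [AddCommGroup M] [Module K M]
    (s : Set M) [FiniteDimensional K (span K s)] :
    ∃ b : Basis (Fin (finrank K (span K s))) K (span K s), ∀ i, (b i : M) ∈ s := by
  have hs : ⊤ ≤ span K (((↑) : span K s → M) ⁻¹' s) := span_span_coe_preimage.ge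
  let b := Basis.ofSpan hs
  refine ⟨b.reindex (b.indexEquiv (finBasis K (span K s))), fun i => ?_⟩
  rw [Basis.reindex_apply]
  exact Basis.ofSpan_subset hs (Set.mem_range_self _)

theorem exists_basis_dual_of_isPerfPair {R M N ι : Type*} [CommRing R] [AddCommGroup M]
    [Module R M] [AddCommGroup N] [Module R N] [Finite ι] [DecidableEq ι]
    (p : M →ₗ[R] N →ₗ[R] R) [p.IsPerfPair] (x : Basis ι R N) :
    ∃ y : Basis ι R M, ∀ i j, p (y i) (x j) = if i = j then 1 else 0 :=
  ⟨x.dualBasis.map p.toPerfPair.symm, fun i j => by simp [Finsupp.single_apply, eq_comm]⟩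

section CommRing

variable {R M : Type*} [CommRing R] [AddCommGroup M] [Module R M] {B : LinearMap.BilinForm R M}
  {U V : Submodule R M}

theorem disjoint_orthogonal_of_codisjoint (hB : B.Nondegenerate) (hUV : Codisjoint U V) :
    Disjoint (B.orthogonal U) (B.orthogonal V) := by
  rw [Submodule.disjoint_def]
  intro z hzU hzV
  refine hB.2 z fun w => ?_
  obtain ⟨u, hu, v, hv, rfl⟩ := Submodule.mem_sup.1 (hUV.eq_top ▸ mem_top : w ∈ U ⊔ V)
  rw [map_add, LinearMap.add_apply, hzU u hu, hzV v hv, add_zero]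

theorem isCompl_of_isotropic (hB : B.Nondegenerate) (hUV : Codisjoint U V)
    (hU : U ≤ B.orthogonal U) (hV : V ≤ B.orthogonal V) : IsCompl U V :=
  ⟨(disjoint_orthogonal_of_codisjoint hB hUV).mono hU hV, hUV⟩

end CommRing

theorem isPerfPair_domRestrict₁₂_of_isotropic {K M : Type*} [Field K] [AddCommGroup M] [Module K M]
    {B : LinearMap.BilinForm K M} {U V : Submodule K M} [FiniteDimensional K V]
    (hB : B.Nondegenerate) (hrefl : B.IsRefl) (hUV : Codisjoint U V)
    (hU : U ≤ B.orthogonal U) (hV : V ≤ B.orthogonal V) : (B.domRestrict₁₂ U V).IsPerfPair := by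
  have hdisj := Submodule.disjoint_def.1 (disjoint_orthogonal_of_codisjoint hB hUV)
  refine .of_injective' ?_ ?_ <;> rw [injective_iff_map_eq_zero]
  · intro u hu
    have huV : (u : M) ∈ B.orthogonal V := fun v hv =>
      hrefl _ _ (LinearMap.congr_fun hu ⟨v, hv⟩)
    exact Subtype.ext (hdisj u (hU u.2) huV)
  · intro v hv
    have hvU : (v : M) ∈ B.orthogonal U := fun u hu => LinearMap.congr_fun hv ⟨u, hu⟩
    exact Subtype.ext (hdisj v hvU (hV v.2))

end LinearAlgebra

section AffBasis

/-- `b` exhibits `L` as a direct sum of copies, indexed by `ι`, of the two-dimensional nonabelian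
Lie algebra `⟨y, x | ⁅y, x⁆ = x⟩`: the `i`-th copy is spanned by `y = b (inl i)`
and `x = b (inr i)`. -/
structure IsAffBasis {ι R L : Type*} [DecidableEq ι] [CommRing R] [LieRing L] [LieAlgebra R L]
    (b : Basis (ι ⊕ ι) R L) : Prop where
  lie_inl_inl : ∀ i j, ⁅b (.inl i), b (.inl j)⁆ = 0
  lie_inr_inr : ∀ i j, ⁅b (.inr i), b (.inr j)⁆ = 0
  lie_inl_inr : ∀ i j, ⁅b (.inl i), b (.inr j)⁆ = if i = j then b (.inr j) else 0

variable {R L M : Type*} [CommRing R] [LieRing L] [LieAlgebra R L] [LieRing M] [LieAlgebra R M]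

theorem map_lie_of_basis {ι : Type*} (b : Basis ι R L) (e : L →ₗ[R] M)
    (he : ∀ i j, e ⁅b i, b j⁆ = ⁅e (b i), e (b j)⁆) (x y : L) : e ⁅x, y⁆ = ⁅e x, e y⁆ := by
  have h : (toEnd R L L : L →ₗ[R] End R L).compr₂ e =
      (toEnd R M M : M →ₗ[R] End R M).compl₁₂ e e :=
    b.ext fun i => b.ext fun j => he i j
  exact LinearMap.congr_fun₂ h x y

namespace IsAffBasis

theorem nonempty_lieEquiv {ι : Type*} [DecidableEq ι] {b : Basis (ι ⊕ ι) R L}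
    {c : Basis (ι ⊕ ι) R M} (hb : IsAffBasis b) (hc : IsAffBasis c) : Nonempty (L ≃ₗ⁅R⁆ M) := by
  let e : L ≃ₗ[R] M := b.equiv c (Equiv.refl _)
  have he : ∀ i, e (b i) = c i := fun i => by simp [e]
  have hlr : ∀ i j, e ⁅b (.inl i), b (.inr j)⁆ = ⁅e (b (.inl i)), e (b (.inr j))⁆ := by
    intro i j
    rw [he, he, hb.lie_inl_inr, hc.lie_inl_inr, apply_ite e, he, map_zero]
  have hlie : ∀ i j, e ⁅b i, b j⁆ = ⁅e (b i), e (b j)⁆ := by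
    rintro (i | i) (j | j)
    · rw [he, he, hb.lie_inl_inl, hc.lie_inl_inl, map_zero]
    · exact hlr i j
    · rw [← lie_skew, ← lie_skew (e _), map_neg, hlr]
    · rw [he, he, hb.lie_inr_inr, hc.lie_inr_inr, map_zero]
  exact ⟨{ e with map_lie' := map_lie_of_basis b e.toLinearMap hlie _ _ }⟩

theorem nonempty_lieEquiv_iff_finrank_eq [StrongRankCondition R] {m n : ℕ}
    {b : Basis (Fin m ⊕ Fin m) R L} {c : Basis (Fin n ⊕ Fin n) R M}
    (hb : IsAffBasis b) (hc : IsAffBasis c) :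
    Nonempty (L ≃ₗ⁅R⁆ M) ↔ finrank R L = finrank R M := by
  refine ⟨fun ⟨e⟩ => e.toLinearEquiv.finrank_eq, fun hdim => ?_⟩
  simp only [finrank_eq_card_basis b, finrank_eq_card_basis c, Fintype.card_sum,
    Fintype.card_fin] at hdim
  obtain rfl : m = n := by lia
  exact hb.nonempty_lieEquiv hc

end IsAffBasis

end AffBasis

section KirillovForm

variable {R L : Type*} [CommRing R] [LieRing L] [LieAlgebra R L]

/-- The Kirillov form `B_f(x, y) = f ⁅x, y⁆` of a functional `f`, as a bilinear form. -/
def kirillovForm (f : Dual R L) : LinearMap.BilinForm R L :=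
  (toEnd R L L : L →ₗ[R] End R L).compr₂ f

@[simp]
theorem kirillovForm_apply (f : Dual R L) (x y : L) : kirillovForm f x y = f ⁅x, y⁆ := rfl

theorem kirillovForm_isAlt (f : Dual R L) : (kirillovForm f).IsAlt := fun x => by simp

theorem le_orthogonal_kirillovForm (f : Dual R L) {U : Submodule R L}
    (hU : ∀ x ∈ U, ∀ y ∈ U, ⁅x, y⁆ = 0) : U ≤ (kirillovForm f).orthogonal U := fun y hy x hx => by
  simp [hU x hx y hy]

theorem IsFrobeniusLieAlgebra.exists_nondegenerate {k L : Type*} [Field k] [LieRing L]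
    [LieAlgebra k L] (hL : IsFrobeniusLieAlgebra k L) :
    ∃ f : Dual k L, (kirillovForm f).Nondegenerate := by
  obtain ⟨f, hf⟩ := hL
  exact ⟨f, (kirillovForm_isAlt f).isRefl.nondegenerate_iff_separatingRight.2 hf⟩

end KirillovForm

section WeightVectors

variable {k L : Type*} [Field k] [LieRing L] [LieAlgebra k L]

/-- The vectors of `L` of some nonzero weight under the adjoint action of `H`. A weight is any
function `χ : H → k`; the vector `0` belongs to this set, having every weight. -/
def nonzeroWeightVectors (H : LieSubalgebra k L) : Set L :=
  {x | ∃ χ : H → k, χ ≠ 0 ∧ x ∈ weightSpace L χ}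

variable {H : LieSubalgebra k L}

theorem exists_lie_eq_smul_of_mem_nonzeroWeightVectors {x : L} (hx : x ∈ nonzeroWeightVectors H)
    (h : H) : ∃ c : k, ⁅(h : L), x⁆ = c • x :=
  let ⟨χ, _, hχ⟩ := hx
  ⟨χ h, (mem_weightSpace χ x).1 hχ h⟩

variable (H) in
theorem span_nonzeroWeightVectors_le_derivedSeries_one :
    span k (nonzeroWeightVectors H) ≤ (derivedSeries k L 1).toSubmodule := by
  rw [span_le]
  rintro x ⟨χ, hχ, hx⟩
  obtain ⟨h, hh⟩ := Function.ne_iff.1 hχ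
  have hmem : ⁅(h : L), x⁆ ∈ derivedSeries k L 1 :=
    LieSubmodule.lie_mem_lie (LieSubmodule.mem_top _) (LieSubmodule.mem_top _)
  have hlie : ⁅(h : L), x⁆ = χ h • x := (mem_weightSpace χ x).1 hx h
  rw [hlie] at hmem
  exact ((derivedSeries k L 1).toSubmodule.smul_mem_iff hh).1 hmem

theorem lie_eq_zero_of_mem_span_nonzeroWeightVectors (hS : derivedSeries k L 2 = ⊥) {x y : L}
    (hx : x ∈ span k (nonzeroWeightVectors H)) (hy : y ∈ span k (nonzeroWeightVectors H)) :
    ⁅x, y⁆ = 0 := by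
  have hxy : ⁅x, y⁆ ∈ derivedSeries k L 2 :=
    LieSubmodule.lie_mem_lie (span_nonzeroWeightVectors_le_derivedSeries_one H hx)
      (span_nonzeroWeightVectors_le_derivedSeries_one H hy)
  rwa [hS, LieSubmodule.mem_bot] at hxy

end WeightVectors

section Frobenius

variable {k L : Type*} [Field k] [LieRing L] [LieAlgebra k L]

theorem map_ne_zero_of_dual {ι : Type*} [DecidableEq ι] {f : Dual k L} {x y : ι → L}
    (hx : ∀ i j, ∃ c : k, ⁅y i, x j⁆ = c • x j)
    (hxy : ∀ i j, f ⁅y i, x j⁆ = if i = j then 1 else 0) (i : ι) : f (x i) ≠ 0 := by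
  intro h
  obtain ⟨c, hc⟩ := hx i i
  simpa [hc, h] using hxy i i

theorem smul_lie_eq_ite_of_dual {ι : Type*} [DecidableEq ι] {f : Dual k L} {x y : ι → L}
    (hx : ∀ i j, ∃ c : k, ⁅y i, x j⁆ = c • x j)
    (hxy : ∀ i j, f ⁅y i, x j⁆ = if i = j then 1 else 0) (i j : ι) :
    ⁅f (x i) • y i, x j⁆ = if i = j then x j else 0 := by
  obtain ⟨c, hc⟩ := hx i j
  have hcf : c * f (x j) = if i = j then 1 else 0 := by rw [← hxy, hc, map_smul, smul_eq_mul]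
  rw [smul_lie, hc, smul_smul]
  split_ifs at hcf ⊢ with hij
  · rw [hij, mul_comm, hcf, one_smul]
  · rw [(mul_eq_zero.1 hcf).resolve_right (map_ne_zero_of_dual hx hxy j), mul_zero, zero_smul]

theorem exists_isAffBasis_of_codisjoint {ι : Type*} [Finite ι] [DecidableEq ι] {f : Dual k L}
    (hf : (kirillovForm f).Nondegenerate) {U V : Submodule k L} (hUV : Codisjoint U V)
    (hU : ∀ u ∈ U, ∀ u' ∈ U, ⁅u, u'⁆ = 0) (hV : ∀ v ∈ V, ∀ v' ∈ V, ⁅v, v'⁆ = 0)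
    (x : Basis ι k V) (hx : ∀ u ∈ U, ∀ i, ∃ c : k, ⁅u, (x i : L)⁆ = c • (x i : L)) :
    ∃ b : Basis (ι ⊕ ι) k L, IsAffBasis b := by
  have : FiniteDimensional k V := x.finiteDimensional_of_finite
  have hUiso := le_orthogonal_kirillovForm f hU
  have hViso := le_orthogonal_kirillovForm f hV
  have hcompl := isCompl_of_isotropic hf hUV hUiso hViso
  have := isPerfPair_domRestrict₁₂_of_isotropic hf (kirillovForm_isAlt f).isRefl hUV hUiso hViso
  obtain ⟨y, hxy⟩ := exists_basis_dual_of_isPerfPair ((kirillovForm f).domRestrict₁₂ U V) x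
  have heig : ∀ i j, ∃ c : k, ⁅(y i : L), (x j : L)⁆ = c • (x j : L) := fun i => hx (y i) (y i).2
  have hunit : ∀ i, IsUnit (f (x i)) := fun i => (map_ne_zero_of_dual heig hxy i).isUnit
  let b := ((y.isUnitSMul hunit).prod x).map (prodEquivOfIsCompl U V hcompl)
  have hinl : ∀ i, b (.inl i) = f (x i) • (y i : L) := by simp [b, Basis.isUnitSMul_apply]
  have hinr : ∀ i, b (.inr i) = x i := by simp [b]
  refine ⟨b, fun i j => ?_, fun i j => ?_, fun i j => ?_⟩
  · rw [hinl, hinl, smul_lie, lie_smul, hU _ (y i).2 _ (y j).2, smul_zero, smul_zero]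
  · rw [hinr, hinr, hV _ (x i).2 _ (x j).2]
  · rw [hinl, hinr, smul_lie_eq_ite_of_dual heig hxy]

theorem exists_isAffBasis_of_sup_span_nonzeroWeightVectors_eq_top [FiniteDimensional k L]
    (H : LieSubalgebra k L) [IsLieAbelian H]
    (hspan : H.toSubmodule ⊔ span k (nonzeroWeightVectors H) = ⊤)
    (hF : IsFrobeniusLieAlgebra k L) (hS : derivedSeries k L 2 = ⊥) :
    ∃ (n : ℕ) (b : Basis (Fin n ⊕ Fin n) k L), IsAffBasis b := by
  obtain ⟨f, hf⟩ := hF.exists_nondegenerate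
  obtain ⟨x, hx⟩ := exists_basis_span_subset (K := k) (nonzeroWeightVectors H)
  refine ⟨_, exists_isAffBasis_of_codisjoint hf (codisjoint_iff.2 hspan) (fun y hy z hz => ?_)
    (fun y hy z hz => lie_eq_zero_of_mem_span_nonzeroWeightVectors hS hy hz) x
    fun y hy i => exists_lie_eq_smul_of_mem_nonzeroWeightVectors (hx i) ⟨y, hy⟩⟩
  exact congrArg Subtype.val (trivial_lie_zero H H ⟨y, hy⟩ ⟨z, hz⟩)

end Frobenius

section Cartan

variable {k g : Type*} [Field k] [PerfectField k] [LieRing g] [LieAlgebra k g]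
  [FiniteDimensional k g] [IsKilling k g] {H p : LieSubalgebra k g} [H.IsCartanSubalgebra]
  [IsTriangularizable k H g]

theorem mem_ofLe_or_mem_nonzeroWeightVectors (hp : H ≤ p) {χ : H → k} {z : p}
    (hz : (z : g) ∈ rootSpace H χ) :
    z ∈ LieSubalgebra.ofLe hp ∨ z ∈ nonzeroWeightVectors (LieSubalgebra.ofLe hp) := by
  rw [LieSubalgebra.mem_ofLe]
  by_cases hχ : χ = 0
  · left
    rwa [hχ, rootSpace_zero_eq] at hz
  · right
    obtain ⟨h, hh⟩ := Function.ne_iff.1 hχ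
    let toH (h' : LieSubalgebra.ofLe hp) : H := ⟨h', (LieSubalgebra.mem_ofLe hp h').1 h'.2⟩
    refine ⟨fun h' => χ (toH h'), Function.ne_iff.2 ⟨⟨⟨h, hp h.2⟩, ?_⟩, hh⟩, ?_⟩
    · exact (LieSubalgebra.mem_ofLe hp _).2 h.2
    · rw [mem_weightSpace]
      exact fun h' => Subtype.ext (IsKilling.lie_eq_smul_of_mem_rootSpace hz (toH h'))

theorem ofLe_sup_span_nonzeroWeightVectors_eq_top (hp : H ≤ p) :
    (LieSubalgebra.ofLe hp).toSubmodule ⊔ span k (nonzeroWeightVectors (LieSubalgebra.ofLe hp)) =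
      ⊤ := by
  let N : LieSubmodule k H g := { p.toSubmodule with lie_mem := fun {h _} => p.lie_mem (hp h.2) }
  suffices hN : N.toSubmodule ≤ ((LieSubalgebra.ofLe hp).toSubmodule ⊔
      span k (nonzeroWeightVectors (LieSubalgebra.ofLe hp))).map p.toSubmodule.subtype by
    rw [eq_top_iff, ← map_le_map_iff_of_injective p.toSubmodule.injective_subtype]
    simpa using hN
  rw [eq_iSup_inf_genWeightSpace k H g N, LieSubmodule.iSup_toSubmodule]
  refine iSup_le fun χ z ⟨hzp, hzχ⟩ => ⟨⟨z, hzp⟩, ?_, rfl⟩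
  obtain hz | hz := mem_ofLe_or_mem_nonzeroWeightVectors hp (z := ⟨z, hzp⟩) hzχ
  · exact mem_sup_left hz
  · exact mem_sup_right (subset_span hz)

theorem exists_isAffBasis_of_isCartanSubalgebra_le (hp : H ≤ p) (hF : IsFrobeniusLieAlgebra k p)
    (hS : derivedSeries k p 2 = ⊥) :
    ∃ (n : ℕ) (b : Basis (Fin n ⊕ Fin n) k p), IsAffBasis b := by
  have : IsLieAbelian (LieSubalgebra.ofLe hp) :=
    (lie_abelian_iff_equiv_lie_abelian (LieSubalgebra.equivOfLe hp)).1 inferInstance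
  exact exists_isAffBasis_of_sup_span_nonzeroWeightVectors_eq_top _
    (ofLe_sup_span_nonzeroWeightVectors_eq_top hp) hF hS

end Cartan

theorem frobenius_twoStepSolvable_liePoset_iso_iff_finrank_eq_general
    {k : Type*} [Field k] [PerfectField k] {g₁ g₂ : Type*}
    [LieRing g₁] [LieAlgebra k g₁] [FiniteDimensional k g₁] [IsKilling k g₁]
    [LieRing g₂] [LieAlgebra k g₂] [FiniteDimensional k g₂] [IsKilling k g₂]
    (H₁ : LieSubalgebra k g₁) [H₁.IsCartanSubalgebra] [IsTriangularizable k H₁ g₁]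
    (p₁ : LieSubalgebra k g₁) (hp₁ : H₁ ≤ p₁)
    (H₂ : LieSubalgebra k g₂) [H₂.IsCartanSubalgebra] [IsTriangularizable k H₂ g₂]
    (p₂ : LieSubalgebra k g₂) (hp₂ : H₂ ≤ p₂)
    (hF₁ : IsFrobeniusLieAlgebra k p₁) (hS₁ : derivedSeries k p₁ 2 = ⊥)
    (hF₂ : IsFrobeniusLieAlgebra k p₂) (hS₂ : derivedSeries k p₂ 2 = ⊥) :
    Nonempty (p₁ ≃ₗ⁅k⁆ p₂) ↔ finrank k p₁ = finrank k p₂ := by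
  obtain ⟨_, _, hb⟩ := exists_isAffBasis_of_isCartanSubalgebra_le hp₁ hF₁ hS₁
  obtain ⟨_, _, hc⟩ := exists_isAffBasis_of_isCartanSubalgebra_le hp₂ hF₂ hS₂
  exact hb.nonempty_lieEquiv_iff_finrank_eq hc

/-- **Classification theorem.**  Two Frobenius, two-step solvable Lie poset algebras (Lie
subalgebras between a Cartan subalgebra and a Borel subalgebra of a finite-dimensional
semisimple Lie algebra over an algebraically closed field of characteristic zero) are
isomorphic if and only if they have the same dimension. -/
theorem frobenius_twoStepSolvable_liePoset_iso_iff_finrank_eq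
    {k : Type*} [Field k] [IsAlgClosed k] [CharZero k]
    {g₁ g₂ : Type*}
    [LieRing g₁] [LieAlgebra k g₁] [FiniteDimensional k g₁] [LieAlgebra.IsSemisimple k g₁]
    [LieRing g₂] [LieAlgebra k g₂] [FiniteDimensional k g₂] [LieAlgebra.IsSemisimple k g₂]
    (b₁ : LieSubalgebra k g₁) (hb₁ : IsBorelSubalgebra k b₁)
    (H₁ : LieSubalgebra k g₁) [H₁.IsCartanSubalgebra] (hH₁ : H₁ ≤ b₁)
    (p₁ : LieSubalgebra k g₁) (hp₁l : H₁ ≤ p₁) (hp₁u : p₁ ≤ b₁)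
    (b₂ : LieSubalgebra k g₂) (hb₂ : IsBorelSubalgebra k b₂)
    (H₂ : LieSubalgebra k g₂) [H₂.IsCartanSubalgebra] (hH₂ : H₂ ≤ b₂)
    (p₂ : LieSubalgebra k g₂) (hp₂l : H₂ ≤ p₂) (hp₂u : p₂ ≤ b₂)
    (hF₁ : IsFrobeniusLieAlgebra k ↥p₁) (hS₁ : IsTwoStepSolvable k ↥p₁)
    (hF₂ : IsFrobeniusLieAlgebra k ↥p₂) (hS₂ : IsTwoStepSolvable k ↥p₂) :
    Nonempty (↥p₁ ≃ₗ⁅k⁆ ↥p₂) ↔ Module.finrank k ↥p₁ = Module.finrank k ↥p₂ :=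
  frobenius_twoStepSolvable_liePoset_iso_iff_finrank_eq_general H₁ p₁ hp₁l H₂ p₂ hp₂l
    hF₁ hS₁.2 hF₂ hS₂.2
end

section
/- Let k be an algebraically closed field of characteristic zero, let g be a finite-dimensional semisimple Lie algebra over k, let b be a Borel subalgebra of g (a maximal solvable Lie subalgebra), let h ⊆ b be a Cartan subalgebra of g, and let p be a Lie subalgebra with h ⊆ p ⊆ b which is Frobenius and two-step solvable. Then p is absolutely rigid: every alternating bilinear map F : p × p → p satisfying the 2-cocycle identity ⁅x, F(y,z)⁆ − ⁅y, F(x,z)⁆ + ⁅z, F(x,y)⁆ − F(⁅x,y⁆, z) + F(⁅x,z⁆, y) − F(⁅y,z⁆, x) = 0 for all x, y, z ∈ p is a coboundary, i.e., there exists a linear map G : p → p with F(x,y) = ⁅x, G(y)⁆ − ⁅y, G(x)⁆ − G(⁅x,y⁆) for all x, y ∈ p. In other words, H²(p, p) = 0. -/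
/-!
Let `T` be a splitting Cartan subalgebra of `L` acting semisimply, and `D = ⁅L, L⁆`, which is
abelian. Weight vectors of nonzero weight lie in `D` and those of weight zero in `T`, so
`L = T + D`. Both summands are isotropic for the Kirillov form, which therefore pairs them
perfectly: the sum is direct, `dim T = dim D`, and the weights of `T` on `D` form a basis of the
dual of `T`. Hence `L` is a direct sum of copies of the two-dimensional nonabelian Lie algebra, with
basis `h₁, …, hₙ` of `T` and `e₁, …, eₙ` of `D` satisfying `⁅hᵢ, eⱼ⁆ = δᵢⱼ eⱼ`.

In these coordinates every 2-cocycle can be altered by an explicit coboundary so as to vanish on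
`T × L`. It then commutes with the action of `T`, so its value at `(eⱼ, eₖ)`, for `j ≠ k`, has the
sum of the weights of `eⱼ` and `eₖ` as its weight. This is not a weight of `L`, and the value is
zero.
-/

section Cohomology

open LieModule.Cohomology

/-- Absolute rigidity, `H²(L, L) = 0`: every Chevalley–Eilenberg 2-cocycle with adjoint coefficients
is a coboundary. -/
def IsAbsolutelyRigid (R L : Type*) [CommRing R] [LieRing L] [LieAlgebra R L] : Prop :=
  twoCocycle R L L ≤ LinearMap.range (d₁₂ R L L)

variable {R L ι : Type*} [CommRing R] [LieRing L] [LieAlgebra R L]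

lemma IsAbsolutelyRigid.exists_primitive (h : IsAbsolutelyRigid R L)
    (F : L →ₗ[R] L →ₗ[R] L) (halt : ∀ x, F x x = 0)
    (hcocycle : ∀ x y z,
      ⁅x, F y z⁆ - ⁅y, F x z⁆ + ⁅z, F x y⁆ - F ⁅x, y⁆ z + F ⁅x, z⁆ y - F ⁅y, z⁆ x = 0) :
    ∃ G : L →ₗ[R] L, ∀ x y, F x y = ⁅x, G y⁆ - ⁅y, G x⁆ - G ⁅x, y⁆ := by
  let c : twoCochain R L L := ⟨F, halt⟩
  have hc : c ∈ twoCocycle R L L := by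
    rw [mem_twoCocycle_iff]
    ext x y z
    exact hcocycle x y z
  obtain ⟨G, hG⟩ := h hc
  exact ⟨G, fun x y => (DFunLike.congr_fun (DFunLike.congr_fun hG x) y).symm⟩

lemma d₁₂_mem_twoCocycle (G : oneCochain R L L) : d₁₂ R L L G ∈ twoCocycle R L L :=
  LinearMap.congr_fun (d₂₃_comp_d₁₂ R L L) G

lemma cocycle_identity {c : twoCochain R L L} (hc : c ∈ twoCocycle R L L) (x y z : L) :
    ⁅x, c y z⁆ - ⁅y, c x z⁆ + ⁅z, c x y⁆ - c ⁅x, y⁆ z + c ⁅x, z⁆ y - c ⁅y, z⁆ x = 0 :=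
  LinearMap.congr_fun (LinearMap.congr_fun₂ hc x y) z

/-- A basis `hᵢ = B (inl i)`, `eᵢ = B (inr i)` exhibiting `L` as a direct sum of copies, indexed
by `ι`, of the Lie algebra `𝔞𝔣𝔣(1)` of affine transformations of the line. -/
structure IsAffineBasis [DecidableEq ι] (B : Module.Basis (ι ⊕ ι) R L) : Prop where
  lie_inl_inl (i j : ι) : ⁅B (.inl i), B (.inl j)⁆ = 0
  lie_inl_inr (i j : ι) : ⁅B (.inl i), B (.inr j)⁆ = if i = j then B (.inr j) else 0
  lie_inr_inr (i j : ι) : ⁅B (.inr i), B (.inr j)⁆ = 0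

/-- The 1-cochain whose coboundary agrees with a 2-cocycle `c` on every `B (inl i)`. Its
`B (inr a)`-component is the contraction of `c` with `B (inl a)`; its `B (inl a)`-component is
prescribed on the basis. -/
noncomputable def affinePrimitive [Fintype ι] (B : Module.Basis (ι ⊕ ι) R L)
    (c : twoCochain R L L) : oneCochain R L L :=
  ∑ a, ((B.coord (.inr a) ∘ₗ c (B (.inl a))).smulRight (B (.inr a)) +
    (B.constr R (Sum.elim (fun j => B.repr (c (B (.inl j)) (B (.inr a))) (.inr a))
      fun j => -B.repr (c (B (.inl j)) (B (.inr j))) (.inl a))).smulRight (B (.inl a)))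

section AffinePrimitive

variable [Fintype ι] (B : Module.Basis (ι ⊕ ι) R L) (c : twoCochain R L L)

lemma repr_affinePrimitive_inr (x : L) (a : ι) :
    B.repr (affinePrimitive B c x) (.inr a) = B.repr (c (B (.inl a)) x) (.inr a) := by
  classical simp [affinePrimitive, Finsupp.single_apply]

lemma repr_affinePrimitive_inl_inl (i a : ι) :
    B.repr (affinePrimitive B c (B (.inl i))) (.inl a) =
      B.repr (c (B (.inl i)) (B (.inr a))) (.inr a) := by
  classical simp [affinePrimitive, Finsupp.single_apply]

lemma repr_affinePrimitive_inr_inl (i a : ι) :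
    B.repr (affinePrimitive B c (B (.inr i))) (.inl a) =
      -B.repr (c (B (.inl i)) (B (.inr i))) (.inl a) := by
  classical simp [affinePrimitive, Finsupp.single_apply]

end AffinePrimitive

namespace IsAffineBasis

lemma of_isCompl [DecidableEq ι] {T D : Submodule R L}
    (h : Module.Basis ι R T) (e : Module.Basis ι R D) (hTD : IsCompl T D)
    (hT : ∀ x ∈ T, ∀ y ∈ T, ⁅x, y⁆ = 0) (hD : ∀ x ∈ D, ∀ y ∈ D, ⁅x, y⁆ = 0)
    (hlie : ∀ i j, ⁅(h i : L), (e j : L)⁆ = if i = j then (e j : L) else 0) :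
    IsAffineBasis ((h.prod e).map (Submodule.prodEquivOfIsCompl T D hTD)) where
  lie_inl_inl i j := by simp [hT]
  lie_inl_inr i j := by simp [hlie]
  lie_inr_inr i j := by simp [hD]

variable [DecidableEq ι] {B : Module.Basis (ι ⊕ ι) R L} (hB : IsAffineBasis B)
include hB

lemma lie_inl (i : ι) (x : L) : ⁅B (.inl i), x⁆ = B.repr x (.inr i) • B (.inr i) := by
  suffices h : LieAlgebra.ad R L (B (.inl i)) = (B.coord (.inr i)).smulRight (B (.inr i)) from
    LinearMap.congr_fun h x
  refine B.ext ?_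
  rintro (j | j)
  · simp [hB.lie_inl_inl]
  · by_cases hij : i = j <;> simp [hB.lie_inl_inr, hij]

lemma lie_inr (i : ι) (x : L) : ⁅B (.inr i), x⁆ = -(B.repr x (.inl i) • B (.inr i)) := by
  suffices h : LieAlgebra.ad R L (B (.inr i)) = -(B.coord (.inl i)).smulRight (B (.inr i)) from
    LinearMap.congr_fun h x
  refine B.ext ?_
  rintro (j | j)
  · rw [LieAlgebra.ad_apply, ← lie_skew, hB.lie_inl_inr]
    by_cases hij : j = i <;> simp [hij]
  · simp [hB.lie_inr_inr]

lemma lie_inl_lie_inl_of_ne {i j : ι} (hij : i ≠ j) (x : L) :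
    ⁅B (.inl i), ⁅B (.inl j), x⁆⁆ = 0 := by
  rw [hB.lie_inl j, lie_smul, hB.lie_inl_inr, if_neg hij, smul_zero]

lemma repr_lie_inl_inl (i a : ι) (x : L) : B.repr ⁅B (.inl i), x⁆ (.inl a) = 0 := by
  simp [hB.lie_inl]

lemma repr_lie_inl_inr (i a : ι) (x : L) :
    B.repr ⁅B (.inl i), x⁆ (.inr a) = if i = a then B.repr x (.inr a) else 0 := by
  by_cases hia : i = a <;> simp [hB.lie_inl, hia]

lemma repr_lie_inr_inl (i a : ι) (x : L) : B.repr ⁅B (.inr i), x⁆ (.inl a) = 0 := by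
  simp [hB.lie_inr]

lemma repr_lie_inr_inr (i a : ι) (x : L) :
    B.repr ⁅B (.inr i), x⁆ (.inr a) = if i = a then -B.repr x (.inl a) else 0 := by
  by_cases hia : i = a <;> simp [hB.lie_inr, hia]

section Cocycle

variable {c : twoCochain R L L} (hc : c ∈ twoCocycle R L L)
include hc

lemma lie_cocycle_inl_inl_inl (i j l : ι) :
    ⁅B (.inl i), c (B (.inl j)) (B (.inl l))⁆ - ⁅B (.inl j), c (B (.inl i)) (B (.inl l))⁆
      + ⁅B (.inl l), c (B (.inl i)) (B (.inl j))⁆ = 0 := by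
  simpa [hB.lie_inl_inl] using cocycle_identity hc (B (.inl i)) (B (.inl j)) (B (.inl l))

lemma lie_cocycle_inl_inl_inr (i j l : ι) :
    ⁅B (.inl i), c (B (.inl j)) (B (.inr l))⁆ - ⁅B (.inl j), c (B (.inl i)) (B (.inr l))⁆
      + ⁅B (.inr l), c (B (.inl i)) (B (.inl j))⁆ =
    (if i = l then c (B (.inl j)) (B (.inr l)) else 0)
      - if j = l then c (B (.inl i)) (B (.inr l)) else 0 := by
  have h := cocycle_identity hc (B (.inl i)) (B (.inl j)) (B (.inr l))
  simp only [hB.lie_inl_inl, hB.lie_inl_inr, map_zero] at h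
  refine sub_eq_zero.mp (Eq.trans ?_ h)
  split_ifs <;> simp [← twoCochain_skew c _ (B (.inr l))] <;> abel

lemma repr_cocycle_inl_inl_inl (i j a : ι) :
    B.repr (c (B (.inl i)) (B (.inl j))) (.inl a) = 0 := by
  have h := congrArg (B.repr · (.inr a)) (hB.lie_cocycle_inl_inl_inr hc i j a)
  simp only [map_add, map_sub, Finsupp.coe_add, Finsupp.coe_sub, Pi.add_apply, Pi.sub_apply,
    apply_ite B.repr, apply_ite DFunLike.coe, ite_apply, map_zero, Finsupp.coe_zero, Pi.zero_apply,
    hB.repr_lie_inl_inr, hB.repr_lie_inr_inr, if_true] at h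
  linear_combination -h

lemma repr_cocycle_inl_inl_inr (i j a : ι) :
    B.repr (c (B (.inl i)) (B (.inl j))) (.inr a) =
      (if i = a then B.repr (c (B (.inl a)) (B (.inl j))) (.inr a) else 0)
        - if j = a then B.repr (c (B (.inl a)) (B (.inl i))) (.inr a) else 0 := by
  have h := congrArg (B.repr · (.inr a)) (hB.lie_cocycle_inl_inl_inl hc a i j)
  simp only [map_add, map_sub, map_zero, Finsupp.coe_add, Finsupp.coe_sub, Pi.add_apply,
    Pi.sub_apply, Finsupp.coe_zero, Pi.zero_apply, hB.repr_lie_inl_inr, if_true] at h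
  linear_combination h

lemma repr_cocycle_inl_inr_inl_of_ne {i j : ι} (hij : i ≠ j) (a : ι) :
    B.repr (c (B (.inl i)) (B (.inr j))) (.inl a) = 0 := by
  have h := congrArg (B.repr · (.inl a)) (hB.lie_cocycle_inl_inl_inr hc i j j)
  simpa [hB.repr_lie_inl_inl, hB.repr_lie_inr_inl, hij] using h

lemma repr_cocycle_inl_inr_inr_of_ne (i : ι) {j a : ι} (haj : a ≠ j) :
    B.repr (c (B (.inl i)) (B (.inr j))) (.inr a) =
      (if i = a then B.repr (c (B (.inl a)) (B (.inr j))) (.inr a) else 0)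
        - if i = j then B.repr (c (B (.inl a)) (B (.inr j))) (.inr a) else 0 := by
  have h := congrArg (B.repr · (.inr a)) (hB.lie_cocycle_inl_inl_inr hc a i j)
  simp only [map_add, map_sub, Finsupp.coe_add, Finsupp.coe_sub, Pi.add_apply, Pi.sub_apply,
    apply_ite B.repr, apply_ite DFunLike.coe, ite_apply, map_zero, Finsupp.coe_zero, Pi.zero_apply,
    hB.repr_lie_inl_inr, hB.repr_lie_inr_inr, if_true, if_neg haj, if_neg haj.symm] at h
  linear_combination h

lemma lie_inl_cocycle_inr_inr {i j : ι} (hij : i ≠ j) :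
    ⁅B (.inl i), c (B (.inr i)) (B (.inr j))⁆ - c (B (.inr i)) (B (.inr j)) =
      ⁅B (.inr i), c (B (.inl i)) (B (.inr j))⁆ - ⁅B (.inr j), c (B (.inl i)) (B (.inr i))⁆ := by
  have h := cocycle_identity hc (B (.inl i)) (B (.inr i)) (B (.inr j))
  simp only [hB.lie_inl_inr, hB.lie_inr_inr, if_true, if_neg hij, map_zero,
    LinearMap.zero_apply] at h
  rw [← sub_eq_zero, ← h]
  abel

lemma d₁₂_affinePrimitive_inl [Fintype ι] (i : ι) :
    d₁₂ R L L (affinePrimitive B c) (B (.inl i)) = c (B (.inl i)) := by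
  refine B.ext fun s => B.ext_elem fun t => ?_
  rcases s with j | j <;> rcases t with a | a
  · simp [hB.repr_lie_inl_inl, hB.lie_inl_inl, hB.repr_cocycle_inl_inl_inl hc]
  · rw [hB.repr_cocycle_inl_inl_inr hc]
    simp [hB.repr_lie_inl_inr, hB.lie_inl_inl, repr_affinePrimitive_inr]
  · by_cases hij : i = j
    · subst hij
      simp [hB.repr_lie_inl_inl, hB.repr_lie_inr_inl, hB.lie_inl_inr, repr_affinePrimitive_inr_inl]
    · simp [hB.repr_lie_inl_inl, hB.repr_lie_inr_inl, hB.lie_inl_inr, hij,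
        hB.repr_cocycle_inl_inr_inl_of_ne hc hij]
  · by_cases haj : a = j
    · subst haj
      by_cases hij : i = a <;>
        simp [hB.repr_lie_inl_inr, hB.repr_lie_inr_inr, hB.lie_inl_inr, hij,
          repr_affinePrimitive_inr, repr_affinePrimitive_inl_inl]
    · rw [hB.repr_cocycle_inl_inr_inr_of_ne hc i haj]
      by_cases hij : i = j <;>
        simp [hB.repr_lie_inl_inr, hB.repr_lie_inr_inr, hB.lie_inl_inr, hij, Ne.symm haj,
          repr_affinePrimitive_inr]

end Cocycle

lemma lie_inl_cocycle_sub_inr_inr {c c' : twoCochain R L L} (hc : c ∈ twoCocycle R L L)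
    (hc' : c' ∈ twoCocycle R L L) (h : ∀ i, c (B (.inl i)) = c' (B (.inl i))) {i j : ι}
    (hij : i ≠ j) :
    ⁅B (.inl i), c (B (.inr i)) (B (.inr j)) - c' (B (.inr i)) (B (.inr j))⁆ =
      c (B (.inr i)) (B (.inr j)) - c' (B (.inr i)) (B (.inr j)) := by
  have := (hB.lie_inl_cocycle_inr_inr hc hij).trans
    (h i ▸ (hB.lie_inl_cocycle_inr_inr hc' hij).symm)
  rw [lie_sub, sub_eq_sub_iff_sub_eq_sub, this]

lemma cocycle_inr_inr_eq {c c' : twoCochain R L L} (hc : c ∈ twoCocycle R L L)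
    (hc' : c' ∈ twoCocycle R L L) (h : ∀ i, c (B (.inl i)) = c' (B (.inl i))) (i j : ι) :
    c (B (.inr i)) (B (.inr j)) = c' (B (.inr i)) (B (.inr j)) := by
  rcases eq_or_ne i j with rfl | hij
  · rw [twoCochain_alt, twoCochain_alt]
  have hi := hB.lie_inl_cocycle_sub_inr_inr hc hc' h hij
  have hj := hB.lie_inl_cocycle_sub_inr_inr hc hc' h hij.symm
  rw [← twoCochain_skew c, ← twoCochain_skew c', ← neg_sub', lie_neg, neg_inj] at hj
  rw [← sub_eq_zero, ← hi, ← hj, hB.lie_inl_lie_inl_of_ne hij]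

lemma cocycle_ext {c c' : twoCochain R L L} (hc : c ∈ twoCocycle R L L)
    (hc' : c' ∈ twoCocycle R L L) (h : ∀ i, c (B (.inl i)) = c' (B (.inl i))) : c = c' := by
  refine Subtype.ext (B.ext fun s => B.ext fun t => ?_)
  rcases s with i | i
  · exact LinearMap.congr_fun (h i) _
  rcases t with j | j
  · change c _ _ = c' _ _
    rw [← twoCochain_skew c, ← twoCochain_skew c', h]
  · exact hB.cocycle_inr_inr_eq hc hc' h i j

theorem isAbsolutelyRigid [Finite ι] : IsAbsolutelyRigid R L :=
  have := Fintype.ofFinite ι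
  fun c hc => ⟨affinePrimitive B c,
    hB.cocycle_ext (d₁₂_mem_twoCocycle _) hc (hB.d₁₂_affinePrimitive_inl hc)⟩

end IsAffineBasis

end Cohomology

lemma exists_basis_apply_eq_ite {k V ι : Type*} [Field k] [AddCommGroup V] [Module k V]
    [Fintype ι] [DecidableEq ι] {χ : ι → Module.Dual k V}
    (hχ : ∀ v, (∀ i, χ i v = 0) → v = 0) (hcard : Fintype.card ι ≤ Module.finrank k V) :
    ∃ b : Module.Basis ι k V, ∀ i j, χ j (b i) = if i = j then 1 else 0 := by
  have hinj : Function.Injective (LinearMap.pi χ) :=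
    (injective_iff_map_eq_zero _).mpr fun v hv => hχ v (congrFun hv)
  have : FiniteDimensional k V := .of_injective (LinearMap.pi χ) hinj
  have hrank : Module.finrank k V = Module.finrank k (ι → k) :=
    (LinearMap.finrank_le_finrank_of_injective hinj).antisymm
      ((Module.finrank_fintype_fun_eq_card k).trans_le hcard)
  let φ : V ≃ₗ[k] (ι → k) := .ofInjectiveOfFinrankEq (LinearMap.pi χ) hinj hrank
  refine ⟨.ofEquivFun φ, fun i j => ?_⟩
  have hφ (v : V) : χ j v = φ v j := rfl
  rw [Module.Basis.coe_ofEquivFun, hφ, φ.apply_symm_apply, Pi.single_apply]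
  simp only [eq_comm]

section WeightBasis

open LieModule

lemma genWeightSpace_eq_weightSpace {R L M : Type*} [CommRing R] [LieRing L] [LieAlgebra R L]
    [LieRing.IsNilpotent L] [AddCommGroup M] [Module R M] [LieRingModule L M] [LieModule R L M]
    (hss : ∀ x : L, (toEnd R L M x).IsSemisimple) (χ : L → R) :
    genWeightSpace M χ = weightSpace M χ := by
  refine le_antisymm (fun m hm => ?_) (weightSpace_le_genWeightSpace M χ)
  refine (mem_weightSpace χ m).mpr fun x => ?_
  have hmx : m ∈ (toEnd R L M x).maxGenEigenspace (χ x) :=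
    genWeightSpace_le_genWeightSpaceOf M x χ hm
  rw [(hss x).isFinitelySemisimple.maxGenEigenspace_eq_eigenspace] at hmx
  exact Module.End.mem_eigenspace_iff.mp hmx

variable {k L M : Type*} [Field k] [LieRing L] [LieAlgebra k L] [LieRing.IsNilpotent L]
  [AddCommGroup M] [Module k M] [FiniteDimensional k M] [LieRingModule L M] [LieModule k L M]
  [IsTriangularizable k L M]

lemma iSup_weightSpace_eq_top (hss : ∀ x : L, (toEnd k L M x).IsSemisimple) :
    ⨆ χ : L → k, weightSpace M χ = ⊤ := by
  simpa only [genWeightSpace_eq_weightSpace hss] using iSup_genWeightSpace_eq_top k L M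

lemma exists_basis_lie_eq_smul (hss : ∀ x : L, (toEnd k L M x).IsSemisimple) :
    ∃ (e : Module.Basis (Fin (Module.finrank k M)) k M)
      (χ : Fin (Module.finrank k M) → Module.Dual k L), ∀ i x, ⁅x, e i⁆ = χ i x • e i := by
  have hspan : ⊤ ≤ Submodule.span k (⋃ χ : L → k, (weightSpace M χ : Set M)) := by
    have h := congrArg LieSubmodule.toSubmodule (iSup_weightSpace_eq_top hss)
    rw [LieSubmodule.iSup_toSubmodule, LieSubmodule.top_toSubmodule, Submodule.iSup_eq_span] at h
    exact h.ge
  let e₀ := Module.Basis.ofSpan hspan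
  let e := e₀.reindex (e₀.indexEquiv (Module.finBasis k M))
  have he (i) : ∃ χ : L → k, ∀ x, ⁅x, e i⁆ = χ x • e i := by
    have hi : e i ∈ Set.range e₀ := ⟨_, (e₀.reindex_apply _ i).symm⟩
    obtain ⟨χ, hχ⟩ := Set.mem_iUnion.mp (Module.Basis.ofSpan_subset hspan hi)
    exact ⟨χ, (mem_weightSpace χ _).mp hχ⟩
  refine ⟨e, fun i => e.coord i ∘ₗ (toEnd k L M : L →ₗ[k] Module.End k M).flip (e i),
    fun i x => ?_⟩
  obtain ⟨χ, hχ⟩ := he i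
  simp [hχ]

end WeightBasis

section Frobenius

variable {k L : Type*} [Field k] [LieRing L] [LieAlgebra k L]

namespace IsFrobeniusLieAlgebra

variable (hF : IsFrobeniusLieAlgebra k L)
include hF

lemma eq_zero_of_forall_lie_eq_zero {z : L} (hz : ∀ x : L, ⁅x, z⁆ = 0) : z = 0 := by
  obtain ⟨f, hf⟩ := hF
  exact hf z fun x => by rw [hz, map_zero]

variable {S N : Submodule k L} (hSN : S ⊔ N = ⊤) (hN : ∀ x ∈ N, ∀ y ∈ N, ⁅x, y⁆ = 0)
include hSN hN

lemma eq_zero_of_mem_of_forall_lie_eq_zero {z : L} (hz : z ∈ N) (hzS : ∀ x ∈ S, ⁅x, z⁆ = 0) :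
    z = 0 := by
  refine hF.eq_zero_of_forall_lie_eq_zero fun x => ?_
  obtain ⟨s, hs, n, hn, rfl⟩ := Submodule.mem_sup.mp (hSN ▸ Submodule.mem_top : x ∈ S ⊔ N)
  rw [add_lie, hzS s hs, hN n hn z hz, add_zero]

lemma isCompl (hS : ∀ x ∈ S, ∀ y ∈ S, ⁅x, y⁆ = 0) : IsCompl S N := by
  refine ⟨Submodule.disjoint_def.mpr fun z hzS hzN => ?_, codisjoint_iff.mpr hSN⟩
  exact hF.eq_zero_of_mem_of_forall_lie_eq_zero hSN hN hzN fun x hx => hS x hx z hzS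

lemma finrank_le [FiniteDimensional k S] : Module.finrank k N ≤ Module.finrank k S := by
  obtain ⟨f, hf⟩ := hF
  let pairing : N →ₗ[k] Module.Dual k S :=
    ((f.compRight k ∘ₗ (LieAlgebra.ad k L : L →ₗ[k] Module.End k L)).flip.domRestrict₁₂ N S)
  have hinj : Function.Injective pairing := by
    refine (injective_iff_map_eq_zero pairing).mpr fun y hy => Subtype.ext (hf y fun x => ?_)
    obtain ⟨s, hs, n, hn, rfl⟩ := Submodule.mem_sup.mp (hSN ▸ Submodule.mem_top : x ∈ S ⊔ N)
    rw [add_lie, hN n hn y y.2, add_zero]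
    exact LinearMap.congr_fun hy ⟨s, hs⟩
  exact (LinearMap.finrank_le_finrank_of_injective hinj).trans_eq Subspace.dual_finrank_eq

end IsFrobeniusLieAlgebra

end Frobenius

section Cartan

open LieAlgebra LieModule

lemma lie_eq_zero_of_derivedSeries_two_eq_bot {R L : Type*} [CommRing R] [LieRing L]
    [LieAlgebra R L] (h2 : derivedSeries R L 2 = ⊥) {x y : L} (hx : x ∈ derivedSeries R L 1)
    (hy : y ∈ derivedSeries R L 1) : ⁅x, y⁆ = 0 := by
  have h : ⁅x, y⁆ ∈ derivedSeries R L 2 := by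
    rw [derivedSeries_def, derivedSeriesOfIdeal_succ]
    exact LieSubmodule.lie_mem_lie hx hy
  rwa [h2, LieSubmodule.mem_bot] at h

lemma lie_mem_derivedSeries_one {R L : Type*} [CommRing R] [LieRing L] [LieAlgebra R L]
    (x y : L) : ⁅x, y⁆ ∈ derivedSeries R L 1 := by
  rw [derivedSeries_def, derivedSeriesOfIdeal_succ]
  exact LieSubmodule.lie_mem_lie (LieSubmodule.mem_top x) (LieSubmodule.mem_top y)

variable {k L : Type*} [Field k] [LieRing L] [LieAlgebra k L] [FiniteDimensional k L]
  {T : LieSubalgebra k L} [T.IsCartanSubalgebra]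
  (hss : ∀ t : T, (ad k L t).IsSemisimple)
include hss

lemma weightSpace_zero_eq_toLieSubmodule : weightSpace L (0 : T → k) = T.toLieSubmodule :=
  (genWeightSpace_eq_weightSpace hss 0).symm.trans (rootSpace_zero_eq k L T)

lemma lie_eq_zero_of_mem_isCartanSubalgebra {x y : L} (hx : x ∈ T) (hy : y ∈ T) :
    ⁅x, y⁆ = 0 := by
  have hy0 : y ∈ weightSpace L (0 : T → k) := by
    rwa [weightSpace_zero_eq_toLieSubmodule hss, LieSubalgebra.mem_toLieSubmodule]
  simpa using (mem_weightSpace _ y).mp hy0 ⟨x, hx⟩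

variable [IsTriangularizable k T L]

lemma sup_derivedSeries_one_eq_top :
    T.toSubmodule ⊔ (derivedSeries k L 1).toSubmodule = ⊤ := by
  have h := congrArg LieSubmodule.toSubmodule (iSup_weightSpace_eq_top hss)
  rw [LieSubmodule.iSup_toSubmodule, LieSubmodule.top_toSubmodule] at h
  refine top_unique (h.ge.trans (iSup_le fun χ => ?_))
  rcases eq_or_ne χ 0 with rfl | hχ
  · rw [weightSpace_zero_eq_toLieSubmodule hss]
    exact le_sup_left
  · obtain ⟨t, ht⟩ := Function.ne_iff.mp hχ
    refine le_trans (fun x hx => ?_) le_sup_right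
    have hx : ⁅(t : L), x⁆ = χ t • x := (mem_weightSpace χ x).mp hx t
    rw [← inv_smul_smul₀ ht x, ← hx]
    exact Submodule.smul_mem _ _ (lie_mem_derivedSeries_one _ _)

theorem exists_isAffineBasis (hF : IsFrobeniusLieAlgebra k L) (h2 : derivedSeries k L 2 = ⊥) :
    ∃ (n : ℕ) (B : Module.Basis (Fin n ⊕ Fin n) k L), IsAffineBasis B := by
  let D : LieSubmodule k T L := (derivedSeries k L 1).restr T
  have hT (x) (hx : x ∈ T.toSubmodule) (y) (hy : y ∈ T.toSubmodule) : ⁅x, y⁆ = 0 :=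
    lie_eq_zero_of_mem_isCartanSubalgebra hss hx hy
  have hD (x) (hx : x ∈ D.toSubmodule) (y) (hy : y ∈ D.toSubmodule) : ⁅x, y⁆ = 0 :=
    lie_eq_zero_of_derivedSeries_two_eq_bot h2 hx hy
  have hTD : T.toSubmodule ⊔ D.toSubmodule = ⊤ := sup_derivedSeries_one_eq_top hss
  have hDss (t : T) : (toEnd k T D t).IsSemisimple := by
    rw [← D.toEnd_restrict_eq_toEnd]
    exact (hss t).restrict _
  obtain ⟨e, χ, he⟩ := exists_basis_lie_eq_smul hDss
  have hχ (t : T) (ht : ∀ i, χ i t = 0) : t = 0 := by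
    have htD : toEnd k T D t = 0 := e.ext fun i => by
      rw [toEnd_apply_apply, he, ht, zero_smul, LinearMap.zero_apply]
    refine Subtype.ext ?_
    refine hF.eq_zero_of_mem_of_forall_lie_eq_zero ((sup_comm _ _).trans hTD) hT t.2 fun x hx => ?_
    rw [← lie_skew, neg_eq_zero]
    exact congrArg Subtype.val (LinearMap.congr_fun htD ⟨x, hx⟩)
  have hrank : Fintype.card (Fin (Module.finrank k D)) ≤ Module.finrank k T :=
    (Fintype.card_fin _).trans_le (hF.finrank_le hTD hD)
  obtain ⟨h, hh⟩ := exists_basis_apply_eq_ite hχ hrank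
  refine ⟨_, _, IsAffineBasis.of_isCompl h e (hF.isCompl hTD hD hT) hT hD fun i j => ?_⟩
  have hij := congrArg Subtype.val (he j (h i))
  simpa [hh, apply_ite Subtype.val] using hij

end Cartan

theorem frobenius_twoStepSolvable_liePoset_second_cohomology_trivial_general {k L : Type*} [Field k]
    [LieRing L] [LieAlgebra k L] [FiniteDimensional k L]
    (T : LieSubalgebra k L) [T.IsCartanSubalgebra] [LieModule.IsTriangularizable k T L]
    (hss : ∀ t : T, (LieAlgebra.ad k L t).IsSemisimple) (hF : IsFrobeniusLieAlgebra k L)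
    (h2 : LieAlgebra.derivedSeries k L 2 = ⊥) : IsAbsolutelyRigid k L := by
  obtain ⟨n, B, hB⟩ := exists_isAffineBasis hss hF h2
  exact hB.isAbsolutelyRigid

lemma isCartanSubalgebra_ofLe {R L : Type*} [CommRing R] [LieRing L] [LieAlgebra R L]
    {H p : LieSubalgebra R L} [H.IsCartanSubalgebra] (hHp : H ≤ p) :
    (LieSubalgebra.ofLe hHp).IsCartanSubalgebra where
  nilpotent :=
    (LieEquiv.nilpotent_iff_equiv_nilpotent (LieSubalgebra.equivOfLe hHp)).mp inferInstance
  self_normalizing := by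
    refine le_antisymm (fun x hx => ?_) (LieSubalgebra.le_normalizer _)
    rw [LieSubalgebra.mem_ofLe, ← LieSubalgebra.IsCartanSubalgebra.self_normalizing (H := H),
      LieSubalgebra.mem_normalizer_iff']
    exact fun y hy => (LieSubalgebra.mem_ofLe hHp _).mp <|
      (LieSubalgebra.mem_normalizer_iff' _ x).mp hx ⟨y, hHp hy⟩ <|
        (LieSubalgebra.mem_ofLe hHp _).mpr hy

lemma isSemisimple_ad_of_isSemisimple_ad_coe {R L : Type*} [CommRing R] [LieRing L]
    [LieAlgebra R L] {p : LieSubalgebra R L} {x : p} (hx : (LieAlgebra.ad R L x).IsSemisimple) :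
    (LieAlgebra.ad R p x).IsSemisimple := by
  have hp : p.toSubmodule ∈ Module.End.invtSubmodule (LieAlgebra.ad R L x) :=
    fun _ hy => p.lie_mem x.2 hy
  exact hx.restrict hp

/-- **Rigidity theorem.**  A Frobenius, two-step solvable Lie poset algebra `p` (a Lie
subalgebra between a Cartan subalgebra and a Borel subalgebra of a finite-dimensional
semisimple Lie algebra over an algebraically closed field of characteristic zero) is
absolutely rigid: `H²(p, p) = 0`, i.e. every Chevalley–Eilenberg 2-cocycle of `p` with
coefficients in the adjoint representation is a 2-coboundary. -/
theorem frobenius_twoStepSolvable_liePoset_second_cohomology_trivial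
    {k : Type*} [Field k] [IsAlgClosed k] [CharZero k]
    {g : Type*} [LieRing g] [LieAlgebra k g] [FiniteDimensional k g]
    [LieAlgebra.IsSemisimple k g]
    (b : LieSubalgebra k g) (hb : IsBorelSubalgebra k b)
    (H : LieSubalgebra k g) [H.IsCartanSubalgebra] (hH : H ≤ b)
    (p : LieSubalgebra k g) (hpl : H ≤ p) (hpu : p ≤ b)
    (hF : IsFrobeniusLieAlgebra k ↥p) (hS : IsTwoStepSolvable k ↥p)
    (F : ↥p →ₗ[k] ↥p →ₗ[k] ↥p) (halt : ∀ x : ↥p, F x x = 0)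
    (hcocycle : ∀ x y z : ↥p,
      ⁅x, F y z⁆ - ⁅y, F x z⁆ + ⁅z, F x y⁆ - F ⁅x, y⁆ z + F ⁅x, z⁆ y - F ⁅y, z⁆ x = 0) :
    ∃ G : ↥p →ₗ[k] ↥p, ∀ x y : ↥p, F x y = ⁅x, G y⁆ - ⁅y, G x⁆ - G ⁅x, y⁆ := by
  have := isCartanSubalgebra_ofLe hpl
  have hss (t : LieSubalgebra.ofLe hpl) : (LieAlgebra.ad k p t).IsSemisimple :=
    isSemisimple_ad_of_isSemisimple_ad_coe <|
      LieAlgebra.IsKilling.isSemisimple_ad_of_mem_isCartanSubalgebra (K := k) (H := H) <|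
        (LieSubalgebra.mem_ofLe hpl _).mp t.2
  exact (frobenius_twoStepSolvable_liePoset_second_cohomology_trivial_general
    (LieSubalgebra.ofLe hpl) hss hF hS.2).exists_primitive F halt hcocycle
end
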